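/- arXiv:0708.3766 — 2 statements merged into one kernel-verified Lean document; each statement's English description precedes it below -/
import Mathlib

section
/- Let a ∈ S, x ∈ C_a, and let η : Γ → ℤ/2ℤ be a finitely supported configuration. Then ℓ((𝟘,a)(η,x)) − ℓ((η,x)) = 1 if η̄_a is not identically zero, and = −1 if η̄_a is identically zero. -/
open MeasureTheory ProbabilityTheory Filter Topology

namespace LamplighterTree

/-- `Γ`: the free product of `q` copies of `ℤ/2ℤ`. -/
abbrev Gamma (q : ℕ) : Type := Monoid.CoprodI (fun _ : Fin q => Multiplicative (ZMod 2))

/-- The generator `a_i` of `Γ`. -/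
def gen (q : ℕ) (i : Fin q) : Gamma q :=
  Monoid.CoprodI.of (i := i) (Multiplicative.ofAdd (1 : ZMod 2))

/-- Word length `|x|` of `x ∈ Γ` with respect to `S = {a_1, …, a_q}`, i.e. the graph
distance from `x` to the identity `o` in the homogeneous tree `T_q`. -/
noncomputable def wlen {q : ℕ} (x : Gamma q) : ℕ :=
  sInf {n | ∃ w : List (Fin q), w.length = n ∧ (w.map (gen q)).prod = x}

/-- `w` is a prefix of `w'`, i.e. `w` lies on the geodesic from `o` to `w'` in `T_q`. -/
def IsPrefix {q : ℕ} (w w' : Gamma q) : Prop :=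
  wlen w + wlen (w⁻¹ * w') = wlen w'

/-- The cone `C_w` rooted at `w`. -/
def cone {q : ℕ} (w : Gamma q) : Set (Gamma q) := {w' | IsPrefix w w'}

/-- Finitely supported lamp configurations `Γ → ℤ/2ℤ`. -/
abbrev Config (q : ℕ) : Type := Gamma q →₀ ZMod 2

/-- The lamplighter group `L_q` as the set of pairs (configuration, position). -/
abbrev L (q : ℕ) : Type := Config q × Gamma q

/-- The translated configuration `xη`, `(xη)(w) = η(x⁻¹ w)`. -/
noncomputable def translate {q : ℕ} (x : Gamma q) (η : Config q) : Config q :=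
  Finsupp.mapDomain (fun w => x * w) η

/-- The wreath-product multiplication `(η₁,x)(η₂,y) = (η₁ ⊕ xη₂, xy)`. -/
noncomputable def lmul {q : ℕ} (z₁ z₂ : L q) : L q :=
  (z₁.1 + translate z₁.2 z₂.1, z₁.2 * z₂.2)

/-- The identity `(𝟘, o)` of `L_q`. -/
def lone (q : ℕ) : L q := (0, 1)

/-- The generator `(𝟙_o, o)` of `L_q`. -/
noncomputable def lampSwitch (q : ℕ) : L q := (Finsupp.single 1 1, 1)

/-- The generator `(𝟘, a_i)` of `L_q`. -/
def move (q : ℕ) (i : Fin q) : L q := (0, gen q i)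

/-- The generating set `S_{L_q}`. -/
noncomputable def lampGen (q : ℕ) : Set (L q) := {lampSwitch q} ∪ {z | ∃ i, z = move q i}

/-- Word length `ℓ(z)` of `z ∈ L_q` with respect to `S_{L_q}`. -/
noncomputable def llen {q : ℕ} (z : L q) : ℕ :=
  sInf {n | ∃ w : List (L q), w.length = n ∧ (∀ g ∈ w, g ∈ lampGen q) ∧
    w.foldr lmul (lone q) = z}

instance {q : ℕ} : MeasurableSpace (Gamma q) := ⊤
instance {q : ℕ} : MeasurableSpace (Config q) := ⊤

/-- The lamplighter random walk `Z_n` built from the increments `i_k = inc k`, `k ≥ 1`. -/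
noncomputable def Z {q : ℕ} {Ω : Type*} (inc : ℕ → Ω → L q) : ℕ → Ω → L q
  | 0 => fun _ => lone q
  | n + 1 => fun ω => lmul (Z inc n ω) (inc (n + 1) ω)

end LamplighterTree

/-!
The length of `(η, x)` in `L_q` is the number of lit lamps plus the length of a shortest walk in the
tree `T_q` from `o` to `x` that visits all of them; by left invariance, the length of `a(η, x)` is
given by the same formula for walks starting at `a`. The edge between `o` and `a` is the only one
that joins `C_a` to its complement. If all lit lamps lie in `C_a`, a walk from `o` to `x ∈ C_a` may
drop everything up to its first crossing of this edge, which leaves a shorter walk from `a`. If some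
lit lamp lies outside `C_a`, a walk from `a` to `x` has the form `a ⇝ a → o ⇝ o → a ⇝ x`, and
making the excursion from `o` first saves one crossing.
-/

namespace LamplighterTree

section Tour

open SimpleGraph

variable {V : Type*} {G : SimpleGraph V} {C : Set V} {s : Finset V} {a o u v w : V}

/-- The travelling-salesman distance: the least length of a walk in `G` from `u` to `v` that visits
every vertex of `s`. It is `0` if there is no such walk. -/
noncomputable def tourLength (G : SimpleGraph V) (s : Finset V) (u v : V) : ℕ :=
  sInf {n | ∃ p : G.Walk u v, (∀ w ∈ s, w ∈ p.support) ∧ p.length = n}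

theorem tourLength_le (p : G.Walk u v) (hp : ∀ w ∈ s, w ∈ p.support) :
    tourLength G s u v ≤ p.length :=
  Nat.sInf_le ⟨p, hp, rfl⟩

theorem exists_walk_forall_mem_support (hG : G.Preconnected) (s : Finset V) (u v : V) :
    ∃ p : G.Walk u v, ∀ w ∈ s, w ∈ p.support := by
  classical
  induction s using Finset.induction generalizing u with
  | empty => exact ⟨(hG u v).some, by simp⟩
  | insert w s _ ih =>
    obtain ⟨p, hp⟩ := ih w
    refine ⟨(hG u w).some.append p, fun x hx => ?_⟩
    rw [Walk.mem_support_append_iff]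
    obtain rfl | hx := Finset.mem_insert.1 hx
    · exact .inr p.start_mem_support
    · exact .inr (hp x hx)

theorem exists_walk_length_eq_tourLength (hG : G.Preconnected) (s : Finset V) (u v : V) :
    ∃ p : G.Walk u v, (∀ w ∈ s, w ∈ p.support) ∧ p.length = tourLength G s u v := by
  obtain ⟨p, hp⟩ := exists_walk_forall_mem_support hG s u v
  exact Nat.sInf_mem (s := {n | ∃ p : G.Walk u v, (∀ w ∈ s, w ∈ p.support) ∧ p.length = n})
    ⟨_, p, hp, rfl⟩

theorem tourLength_le_succ_of_adj (hG : G.Preconnected) (h : G.Adj u w) :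
    tourLength G s u v ≤ tourLength G s w v + 1 := by
  obtain ⟨p, hp, hlen⟩ := exists_walk_length_eq_tourLength hG s w v
  rw [← hlen, ← Walk.length_cons h]
  exact tourLength_le _ fun x hx => List.mem_cons_of_mem _ (hp x hx)

/-- The edge from `a ∈ C` to `o ∉ C` is the only edge of `G` between `C` and its complement. -/
structure IsCutEdge (G : SimpleGraph V) (C : Set V) (a o : V) : Prop where
  adj : G.Adj a o
  mem : a ∈ C
  notMem : o ∉ C
  eq_of_adj : ∀ {u v : V}, G.Adj u v → u ∈ C → v ∉ C → u = a ∧ v = o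

namespace IsCutEdge

theorem compl (h : IsCutEdge G C a o) : IsCutEdge G Cᶜ o a where
  adj := h.adj.symm
  mem := h.notMem
  notMem := not_not.2 h.mem
  eq_of_adj huv hu hv := (h.eq_of_adj huv.symm (not_not.1 hv) hu).symm

theorem exists_eq_append_cons (h : IsCutEdge G C a o) (p : G.Walk u v) (hu : u ∈ C)
    (hv : v ∉ C) : ∃ (q : G.Walk u a) (r : G.Walk o v),
      p = q.append (.cons h.adj r) ∧ ∀ w ∈ q.support, w ∈ C := by
  induction p with
  | nil => exact absurd hu hv
  | @cons u x v hux p ih =>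
    by_cases hx : x ∈ C
    · obtain ⟨q, r, rfl, hq⟩ := ih hx hv
      exact ⟨.cons hux q, r, rfl, by simpa [hu] using hq⟩
    · obtain ⟨rfl, rfl⟩ := h.eq_of_adj hux hu hx
      exact ⟨.nil, p, rfl, by simpa using hu⟩

/-- Only the part of the walk before its first crossing of the cut edge is dropped. -/
theorem exists_shorter_walk_from_inside (h : IsCutEdge G C a o) (p : G.Walk o v) (hv : v ∈ C) :
    ∃ p' : G.Walk a v, (∀ w ∈ p.support, w ∈ C → w ∈ p'.support) ∧ p'.length < p.length := by
  obtain ⟨q, r, rfl, hq⟩ := h.compl.exists_eq_append_cons p h.notMem (not_not.2 hv)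
  refine ⟨r, fun w hw hwC => ?_, by simp; omega⟩
  rw [Walk.mem_support_append_iff, Walk.support_cons,
    List.mem_cons] at hw
  obtain hw | rfl | hw := hw
  · exact absurd hwC (hq w hw)
  · exact absurd hwC h.notMem
  · exact hw

/-- A walk `a ⇝ a → o ⇝ o → a ⇝ v` is rearranged to `o ⇝ o → a ⇝ a ⇝ v`. -/
theorem exists_shorter_walk_from_outside (h : IsCutEdge G C a o) (p : G.Walk a v) (hv : v ∈ C)
    (hw : w ∈ p.support) (hwC : w ∉ C) :
    ∃ p' : G.Walk o v, p.support ⊆ p'.support ∧ p'.length < p.length := by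
  classical
  obtain ⟨q, r, hqr, -⟩ := h.exists_eq_append_cons (p.takeUntil w hw) h.mem hwC
  obtain ⟨q', r', hqr', -⟩ := h.compl.exists_eq_append_cons (r.append (p.dropUntil w hw))
    h.notMem (not_not.2 hv)
  have hp : p = q.append (.cons h.adj (q'.append (.cons h.adj.symm r'))) := by
    rw [← hqr', ← Walk.cons_append, Walk.append_assoc, ← hqr, p.take_spec]
  refine ⟨q'.append (.cons h.adj.symm (q.append r')), fun x hx => ?_, ?_⟩
  · have := q.start_mem_support
    simp only [hp, Walk.mem_support_append_iff, Walk.support_cons, List.mem_cons] at hx ⊢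
    grind
  · simp only [hp, Walk.length_append, Walk.length_cons]
    omega

theorem tourLength_outside_of_subset (h : IsCutEdge G C a o) (hG : G.Preconnected) (hv : v ∈ C)
    (hs : ↑s ⊆ C) : tourLength G s o v = tourLength G s a v + 1 := by
  refine le_antisymm (tourLength_le_succ_of_adj hG h.adj.symm) ?_
  obtain ⟨p, hp, hlen⟩ := exists_walk_length_eq_tourLength hG s o v
  obtain ⟨p', hp', hlen'⟩ := h.exists_shorter_walk_from_inside p hv
  have := tourLength_le p' fun w hw => hp' w (hp w hw) (hs hw)
  omega

theorem tourLength_inside_of_not_subset (h : IsCutEdge G C a o) (hG : G.Preconnected)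
    (hv : v ∈ C) (hs : ¬ ↑s ⊆ C) : tourLength G s a v = tourLength G s o v + 1 := by
  refine le_antisymm (tourLength_le_succ_of_adj hG h.adj) ?_
  obtain ⟨w, hw, hwC⟩ := Set.not_subset.1 hs
  obtain ⟨p, hp, hlen⟩ := exists_walk_length_eq_tourLength hG s a v
  obtain ⟨p', hp', hlen'⟩ := h.exists_shorter_walk_from_outside p hv (hp w hw) hwC
  have := tourLength_le p' fun x hx => hp' (hp x hx)
  omega

end IsCutEdge

end Tour

theorem mulCayley_preconnected {M : Type*} [Group M] {S : Set M}
    (hS : Subgroup.closure S = ⊤) : (SimpleGraph.mulCayley S).Preconnected := by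
  suffices h : ∀ g ∈ Subgroup.closure S, ∀ x, (SimpleGraph.mulCayley S).Reachable x (x * g) by
    intro x y
    simpa using h (x⁻¹ * y) (hS ▸ Subgroup.mem_top _) x
  intro g hg
  induction hg using Subgroup.closure_induction with
  | mem g hg =>
    intro x
    by_cases hx : x = x * g
    · rw [← hx]
    · exact ((SimpleGraph.mulCayley_adj' S _ _).2 ⟨hx, g, hg, .inl rfl⟩).reachable
  | one => simp
  | mul g h _ _ ihg ihh =>
    intro x
    simpa only [mul_assoc] using (ihg x).trans (ihh (x * g))
  | inv g _ ih =>
    intro x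
    simpa using (ih (x * g⁻¹)).symm

section FreeProduct

open Monoid.CoprodI

variable {q : ℕ} {i j k : Fin q} {x y : Gamma q}

theorem gen_mul_gen (i : Fin q) : gen q i * gen q i = 1 := by
  rw [gen, ← map_mul, show Multiplicative.ofAdd (1 : ZMod 2) * .ofAdd 1 = 1 by decide, map_one]

theorem gen_inv (i : Fin q) : (gen q i)⁻¹ = gen q i :=
  inv_eq_of_mul_eq_one_left (gen_mul_gen i)

theorem gen_mul_cancel_left (i : Fin q) (y : Gamma q) : gen q i * (gen q i * y) = y := by
  rw [← mul_assoc, gen_mul_gen, one_mul]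

/-- The first letter of the reduced word of `y`, and `none` for the identity. -/
def firstLetter (y : Gamma q) : Option (Fin q) := (Word.equiv y).fstIdx

/-- The number of letters of the reduced word of `y`, through which `wlen y` is computed. -/
def reducedLength (y : Gamma q) : ℕ := (Word.equiv y).toList.length

theorem equiv_gen_mul (h : (Word.equiv y).fstIdx ≠ some k) :
    Word.equiv (gen q k * y) = .cons (Multiplicative.ofAdd 1) (Word.equiv y) h (by decide) := by
  rw [Word.cons_eq_smul]
  exact mul_smul (gen q k) y _

theorem firstLetter_one : firstLetter (1 : Gamma q) = none := by
  simp [firstLetter, Word.equiv, Word.fstIdx, Word.empty]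

theorem reducedLength_one : reducedLength (1 : Gamma q) = 0 := by
  simp [reducedLength, Word.equiv, Word.empty]

theorem firstLetter_gen_mul (h : firstLetter y ≠ some k) :
    firstLetter (gen q k * y) = some k :=
  (congrArg Word.fstIdx (equiv_gen_mul h)).trans (Word.fstIdx_cons _ _ _ _)

theorem reducedLength_gen_mul (h : firstLetter y ≠ some k) :
    reducedLength (gen q k * y) = reducedLength y + 1 :=
  congrArg (fun w : Word _ => w.toList.length) (equiv_gen_mul h)

@[elab_as_elim]
theorem reduced_induction {motive : Gamma q → Prop} (one : motive 1)
    (gen_mul : ∀ k y, firstLetter y ≠ some k → motive y → motive (gen q k * y))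
    (y : Gamma q) : motive y := by
  obtain ⟨w, rfl⟩ := Word.equiv.symm.surjective y
  induction w using Word.consRecOn with
  | empty => exact one
  | cons i m w hw hm ih =>
    obtain rfl : m = Multiplicative.ofAdd 1 := by
      revert m
      decide
    have hfirst : firstLetter (Word.equiv.symm w) = w.fstIdx :=
      congrArg Word.fstIdx (Equiv.apply_symm_apply _ w)
    exact gen_mul i _ (hfirst.trans_ne hw) ih

theorem firstLetter_gen_mul_ne (h : firstLetter y = some k) :
    firstLetter (gen q k * y) ≠ some k := by
  induction y using reduced_induction with
  | one => simp [firstLetter_one] at h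
  | gen_mul j y hj _ =>
    obtain rfl : j = k := by simpa [firstLetter_gen_mul hj] using h
    rwa [gen_mul_cancel_left]

theorem reducedLength_gen_mul_add_one (h : firstLetter y = some k) :
    reducedLength (gen q k * y) + 1 = reducedLength y := by
  rw [← reducedLength_gen_mul (firstLetter_gen_mul_ne h), gen_mul_cancel_left]

theorem reducedLength_prod_le (w : List (Fin q)) :
    reducedLength (w.map (gen q)).prod ≤ w.length := by
  induction w with
  | nil => simp [reducedLength_one]
  | cons k w ih =>
    rw [List.map_cons, List.prod_cons, List.length_cons]
    by_cases h : firstLetter (w.map (gen q)).prod = some k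
    · have := reducedLength_gen_mul_add_one h
      omega
    · rw [reducedLength_gen_mul h]
      omega

theorem exists_word_length_eq_reducedLength (y : Gamma q) :
    ∃ w : List (Fin q), w.length = reducedLength y ∧ (w.map (gen q)).prod = y := by
  induction y using reduced_induction with
  | one => exact ⟨[], by simp [reducedLength_one]⟩
  | gen_mul k y hk ih =>
    obtain ⟨w, hlen, hprod⟩ := ih
    exact ⟨k :: w, by simp [hlen, hprod, reducedLength_gen_mul hk]⟩

theorem wlen_eq_reducedLength (y : Gamma q) : wlen y = reducedLength y := by
  refine le_antisymm (Nat.sInf_le (exists_word_length_eq_reducedLength y)) ?_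
  refine le_csInf ⟨_, exists_word_length_eq_reducedLength y⟩ ?_
  rintro _ ⟨w, rfl, rfl⟩
  exact reducedLength_prod_le w

theorem firstLetter_gen (i : Fin q) : firstLetter (gen q i) = some i := by
  simpa using firstLetter_gen_mul (y := 1) (k := i) (by simp [firstLetter_one])

theorem mem_cone_gen_iff : y ∈ cone (gen q i) ↔ firstLetter y = some i := by
  have hgen : reducedLength (gen q i) = 1 := by
    simpa [reducedLength_one] using
      reducedLength_gen_mul (y := 1) (k := i) (by simp [firstLetter_one])
  change wlen _ + wlen _ = wlen _ ↔ _
  rw [gen_inv, wlen_eq_reducedLength, wlen_eq_reducedLength, wlen_eq_reducedLength, hgen]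
  refine ⟨fun h => ?_, fun h => by rw [← reducedLength_gen_mul_add_one h, add_comm]⟩
  by_contra hy
  rw [reducedLength_gen_mul hy] at h
  omega

theorem firstLetter_mul_gen (hy : y ≠ 1) (hyj : y ≠ gen q j) :
    firstLetter (y * gen q j) = firstLetter y := by
  induction y using reduced_induction with
  | one => exact absurd rfl hy
  | gen_mul k y hk ih =>
    rw [mul_assoc, firstLetter_gen_mul hk]
    apply firstLetter_gen_mul
    obtain rfl | hy1 := eq_or_ne y 1
    · rw [one_mul, firstLetter_gen]
      rintro ⟨⟩
      simp at hyj
    obtain rfl | hyj' := eq_or_ne y (gen q j)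
    · simp [gen_mul_gen, firstLetter_one]
    · rwa [ih hy1 hyj']

/-- The Cayley graph `T_q` of `Γ` with respect to `S = {a_1, …, a_q}`, on which the lamplighter
walks. -/
abbrev tree (q : ℕ) : SimpleGraph (Gamma q) := SimpleGraph.mulCayley (Set.range (gen q))

theorem tree_adj_iff : (tree q).Adj x y ↔ ∃ j, x * gen q j = y := by
  rw [SimpleGraph.mulCayley_adj']
  constructor
  · rintro ⟨-, _, ⟨j, rfl⟩, h | rfl⟩
    · exact ⟨j, h⟩
    · exact ⟨j, by rw [mul_assoc, gen_mul_gen, mul_one]⟩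
  · rintro ⟨j, rfl⟩
    refine ⟨fun h => ?_, gen q j, ⟨j, rfl⟩, .inl rfl⟩
    have := firstLetter_gen j
    rw [left_eq_mul.1 h, firstLetter_one] at this
    contradiction

theorem closure_range_gen (q : ℕ) : Subgroup.closure (Set.range (gen q)) = ⊤ := by
  refine eq_top_iff.2 fun y _ => ?_
  induction y using reduced_induction with
  | one => exact one_mem _
  | gen_mul k y _ ih =>
    exact mul_mem (Subgroup.subset_closure ⟨k, rfl⟩) (ih (Subgroup.mem_top y))

theorem tree_preconnected (q : ℕ) : (tree q).Preconnected :=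
  mulCayley_preconnected (closure_range_gen q)

theorem isCutEdge_cone_gen (i : Fin q) :
    IsCutEdge (tree q) (cone (gen q i)) (gen q i) 1 where
  adj := tree_adj_iff.2 ⟨i, gen_mul_gen i⟩
  mem := mem_cone_gen_iff.2 (firstLetter_gen i)
  notMem := by simp [mem_cone_gen_iff, firstLetter_one]
  eq_of_adj {x y} hxy hx hy := by
    obtain ⟨j, rfl⟩ := tree_adj_iff.1 hxy
    rw [mem_cone_gen_iff] at hx hy
    have hx1 : x ≠ 1 := by
      rintro rfl
      simp [firstLetter_one] at hx
    obtain rfl : x = gen q j := by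
      by_contra hxj
      exact hy ((firstLetter_mul_gen hx1 hxj).trans hx)
    obtain rfl : j = i := by simpa [firstLetter_gen] using hx
    exact ⟨rfl, gen_mul_gen j⟩

end FreeProduct

section Lamplighter

variable {q : ℕ} {j : Fin q} {η : Config q} {e y : Gamma q} {w : List (L q)}

theorem translate_zero (x : Gamma q) : translate x (0 : Config q) = 0 :=
  Finsupp.mapDomain_zero

theorem translate_one (η : Config q) : translate 1 η = η := by
  simp only [translate, one_mul]
  exact Finsupp.mapDomain_id

theorem translate_add (x : Gamma q) (η ξ : Config q) :
    translate x (η + ξ) = translate x η + translate x ξ :=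
  Finsupp.mapDomain_add

theorem translate_mul (x y : Gamma q) (η : Config q) :
    translate (x * y) η = translate x (translate y η) := by
  simp only [translate, ← Finsupp.mapDomain_comp, Function.comp_def, mul_assoc]

theorem lmul_assoc (z₁ z₂ z₃ : L q) : lmul (lmul z₁ z₂) z₃ = lmul z₁ (lmul z₂ z₃) := by
  simp only [lmul, translate_mul, translate_add, add_assoc, mul_assoc]

theorem one_lmul (z : L q) : lmul (0, 1) z = z := by
  simp [lmul, translate_one]

theorem lmul_eq_add (ξ : Config q) (y : Gamma q) (z : L q) :
    lmul (ξ, y) z = (ξ + (lmul (0, y) z).1, (lmul (0, y) z).2) := by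
  simp [lmul]

theorem lmul_move (y : Gamma q) (j : Fin q) : lmul (0, y) (move q j) = (0, y * gen q j) := by
  simp [lmul, move, translate_zero]

theorem lmul_lampSwitch (y : Gamma q) :
    lmul (0, y) (lampSwitch q) = (Finsupp.single y 1, y) := by
  simp [lmul, lampSwitch, translate]

/-- Following the instructions `w`, a lamplighter who starts at `y` with all lamps off ends at `e`
with lamp configuration `η`. Elements of `L_q` thus become words read from an arbitrary starting
point. -/
structure IsRoute (w : List (L q)) (y : Gamma q) (η : Config q) (e : Gamma q) : Prop where
  mem_lampGen : ∀ g ∈ w, g ∈ lampGen q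
  lmul_foldr : lmul (0, y) (w.foldr lmul (lone q)) = (η, e)

theorem isRoute_nil (y : Gamma q) : IsRoute [] y 0 y :=
  ⟨by simp, by simp [lmul, lone, translate_zero]⟩

theorem isRoute_move_cons_iff :
    IsRoute (move q j :: w) y η e ↔ IsRoute w (y * gen q j) η e := by
  have hmove : move q j ∈ lampGen q := .inr ⟨j, rfl⟩
  have heval (z : L q) : lmul (0, y) (lmul (move q j) z) = lmul (0, y * gen q j) z := by
    rw [← lmul_assoc, lmul_move]
  constructor
  · rintro ⟨hw, h⟩
    exact ⟨fun g hg => hw g (List.mem_cons_of_mem _ hg), by rwa [List.foldr_cons, heval] at h⟩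
  · rintro ⟨hw, h⟩
    exact ⟨List.forall_mem_cons.2 ⟨hmove, hw⟩, by rwa [List.foldr_cons, heval]⟩

theorem isRoute_lampSwitch_cons_iff :
    IsRoute (lampSwitch q :: w) y η e ↔ IsRoute w y (Finsupp.single y 1 + η) e := by
  have hswitch : lampSwitch q ∈ lampGen q := .inl rfl
  have heval (z : L q) : lmul (0, y) (lmul (lampSwitch q) z) = (η, e) ↔
      lmul (0, y) z = (Finsupp.single y 1 + η, e) := by
    rw [← lmul_assoc, lmul_lampSwitch, lmul_eq_add, Prod.mk.injEq, Prod.ext_iff,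
      ← eq_sub_iff_add_eq', ZModModule.sub_eq_add, add_comm η]
  constructor
  · rintro ⟨hw, h⟩
    exact ⟨fun g hg => hw g (List.mem_cons_of_mem _ hg), (heval _).1 h⟩
  · rintro ⟨hw, h⟩
    exact ⟨List.forall_mem_cons.2 ⟨hswitch, hw⟩, (heval _).2 h⟩

theorem support_subset_insert_support_single_add {α M : Type*} [DecidableEq α] [AddZeroClass M]
    (a : α) (b : M) (f : α →₀ M) : f.support ⊆ insert a (Finsupp.single a b + f).support := by
  intro x hx
  obtain rfl | hxa := eq_or_ne x a
  · exact Finset.mem_insert_self _ _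
  · refine Finset.mem_insert_of_mem ?_
    simpa [Finsupp.single_eq_of_ne hxa] using hx

theorem IsRoute.exists_walk (h : IsRoute w y η e) :
    ∃ p : (tree q).Walk y e,
      (∀ x ∈ η.support, x ∈ p.support) ∧ η.support.card + p.length ≤ w.length := by
  induction w generalizing y η with
  | nil =>
    obtain ⟨rfl, rfl⟩ := Prod.mk.inj ((isRoute_nil y).lmul_foldr.symm.trans h.lmul_foldr)
    exact ⟨.nil, by simp⟩
  | cons g w ih =>
    obtain rfl | ⟨j, rfl⟩ := h.mem_lampGen g List.mem_cons_self
    · obtain ⟨p, hp, hlen⟩ := ih (isRoute_lampSwitch_cons_iff.1 h)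
      have hsub := support_subset_insert_support_single_add y 1 η
      refine ⟨p, fun x hx => ?_, ?_⟩
      · obtain rfl | hx := Finset.mem_insert.1 (hsub hx)
        · exact p.start_mem_support
        · exact hp x hx
      · have := (Finset.card_le_card hsub).trans (Finset.card_insert_le _ _)
        rw [List.length_cons]
        omega
    · obtain ⟨p, hp, hlen⟩ := ih (isRoute_move_cons_iff.1 h)
      refine ⟨.cons (tree_adj_iff.2 ⟨j, rfl⟩) p,
        fun x hx => List.mem_cons_of_mem _ (hp x hx), ?_⟩
      simp only [SimpleGraph.Walk.length_cons, List.length_cons]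
      omega

theorem IsRoute.exists_of_erase (h : IsRoute w y (η.erase y) e) :
    ∃ w', IsRoute w' y η e ∧
      w'.length + (η.erase y).support.card = w.length + η.support.card := by
  by_cases hy : y ∈ η.support
  · have hone : η y = 1 := by
      have := Finsupp.mem_support_iff.1 hy
      revert this
      generalize η y = b
      revert b
      decide
    have herase : Finsupp.single y 1 + η = η.erase y := by
      nth_rw 1 [← Finsupp.single_add_erase y η]
      rw [hone, ← add_assoc, ZModModule.add_self, zero_add]
    refine ⟨lampSwitch q :: w, isRoute_lampSwitch_cons_iff.2 (herase ▸ h), ?_⟩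
    rw [Finsupp.support_erase, ← Finset.card_erase_add_one hy, List.length_cons]
    omega
  · rw [Finsupp.erase_of_notMem_support hy] at h ⊢
    exact ⟨w, h, rfl⟩

/-- On the first visit to each vertex the lamplighter sets its lamp. -/
theorem exists_isRoute_of_walk (p : (tree q).Walk y e) (hp : ∀ x ∈ η.support, x ∈ p.support) :
    ∃ w, IsRoute w y η e ∧ w.length = η.support.card + p.length := by
  induction p generalizing η with
  | @nil y =>
    have herase : η.erase y = 0 := by
      ext x
      obtain rfl | hxy := eq_or_ne x y
      · simp
      · rw [Finsupp.erase_ne hxy]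
        by_contra hx
        exact hxy (by simpa using hp x (Finsupp.mem_support_iff.2 hx))
    obtain ⟨w, hw, hlen⟩ := IsRoute.exists_of_erase (herase ▸ isRoute_nil y)
    exact ⟨w, hw, by simpa [herase] using hlen⟩
  | @cons y y' e hyy' p ih =>
    obtain ⟨j, rfl⟩ := tree_adj_iff.1 hyy'
    obtain ⟨w, hw, hlen⟩ := ih (η := η.erase y) fun x hx => by
      rw [Finsupp.support_erase, Finset.mem_erase] at hx
      simpa [hx.1] using hp x hx.2
    obtain ⟨w', hw', hlen'⟩ := IsRoute.exists_of_erase (isRoute_move_cons_iff.2 hw)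
    refine ⟨w', hw', ?_⟩
    simp only [SimpleGraph.Walk.length_cons, List.length_cons] at hlen' ⊢
    omega

theorem isRoute_iff : IsRoute w y η e ↔
    (∀ g ∈ w, g ∈ lampGen q) ∧ w.foldr lmul (lone q) = lmul (0, y⁻¹) (η, e) := by
  have hcancel (x : Gamma q) (z : L q) : lmul (0, x⁻¹) (lmul (0, x) z) = z := by
    rw [← lmul_assoc, show lmul (0, x⁻¹) ((0, x) : L q) = (0, 1) by simp [lmul, translate_zero],
      one_lmul]
  constructor
  · rintro ⟨hw, h⟩
    exact ⟨hw, by rw [← h, hcancel]⟩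
  · rintro ⟨hw, h⟩
    exact ⟨hw, by rw [h]; simpa using hcancel y⁻¹ (η, e)⟩

theorem llen_inv_lmul (y : Gamma q) (η : Config q) (e : Gamma q) :
    llen (lmul (0, y⁻¹) (η, e)) = η.support.card + tourLength (tree q) η.support y e := by
  obtain ⟨p, hp, hlen⟩ := exists_walk_length_eq_tourLength (tree_preconnected q) η.support y e
  obtain ⟨w, hw, hwlen⟩ := exists_isRoute_of_walk p hp
  rw [← hlen, ← hwlen]
  refine le_antisymm (Nat.sInf_le ⟨w, rfl, isRoute_iff.1 hw⟩) ?_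
  refine le_csInf ⟨_, w, rfl, isRoute_iff.1 hw⟩ ?_
  rintro _ ⟨w', rfl, hw'⟩
  obtain ⟨p', hp', hlen'⟩ := (isRoute_iff.2 hw').exists_walk
  have := tourLength_le p' hp'
  omega

theorem llen_eq_card_add_tourLength (η : Config q) (x : Gamma q) :
    llen (η, x) = η.support.card + tourLength (tree q) η.support 1 x := by
  rw [← llen_inv_lmul, inv_one, one_lmul]

theorem llen_move_lmul_eq_card_add_tourLength (i : Fin q) (η : Config q) (x : Gamma q) :
    llen (lmul (move q i) (η, x)) =
      η.support.card + tourLength (tree q) η.support (gen q i) x := by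
  rw [← llen_inv_lmul, gen_inv, move]

end Lamplighter

theorem llen_diff_move_of_mem_cone_general {q : ℕ} (i : Fin q) (η : Config q) (x : Gamma q)
    (hx : x ∈ cone (gen q i)) :
    ((∃ w ∉ cone (gen q i), η w ≠ 0) →
      (llen (lmul (move q i) (η, x)) : ℤ) - (llen ((η, x) : L q) : ℤ) = 1) ∧
    ((∀ w ∉ cone (gen q i), η w = 0) →
      (llen (lmul (move q i) (η, x)) : ℤ) - (llen ((η, x) : L q) : ℤ) = -1) := by
  have hcut := isCutEdge_cone_gen i
  have hconn := tree_preconnected q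
  rw [llen_move_lmul_eq_card_add_tourLength, llen_eq_card_add_tourLength]
  constructor
  · rintro ⟨w, hw, hηw⟩
    have hout : ¬ ↑η.support ⊆ cone (gen q i) := fun h =>
      hw (h (Finsupp.mem_support_iff.2 hηw))
    have := hcut.tourLength_inside_of_not_subset hconn hx hout
    omega
  · intro hη
    have hin : ↑η.support ⊆ cone (gen q i) := fun w hw =>
      by_contra fun hwC => Finsupp.mem_support_iff.1 hw (hη w hwC)
    have := hcut.tourLength_outside_of_subset hconn hx hin
    omega

/-- for `a ∈ S`, `x ∈ C_a` and a finitely supported configuration `η`,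
`ℓ((𝟘,a)(η,x)) − ℓ((η,x)) = 1` if `η̄_a ≢ 𝟘` and `= −1` if `η̄_a ≡ 𝟘`. -/
theorem llen_diff_move_of_mem_cone {q : ℕ} (hq : 3 ≤ q) (i : Fin q)
    (η : Config q) (x : Gamma q) (hx : x ∈ cone (gen q i)) :
    ((∃ w ∉ cone (gen q i), η w ≠ 0) →
      (llen (lmul (move q i) (η, x)) : ℤ) - (llen ((η, x) : L q) : ℤ) = 1) ∧
    ((∀ w ∉ cone (gen q i), η w = 0) →
      (llen (lmul (move q i) (η, x)) : ℤ) - (llen ((η, x) : L q) : ℤ) = -1) :=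
  llen_diff_move_of_mem_cone_general i η x hx

end LamplighterTree
end

section
/- Let q ≥ 3 be an integer and p ∈ (0,1) a real number with p ≤ (q−2)/(q−1). Then ℓ_low,2 ≥ ℓ_low, where ℓ_low = ((1−p)(q−2)/q) · (q−2+2p(q+1))/(pq+q−2), ℓ_low,2 = ((1−p)(q−2)/q) · (1 + (2q/(q−1)) ν̂_3 + pq/(pq+q−2)), ν̂_3 = p(q−2+p) / (q(pq+q−2)(1−F̄)(1−(1−p)F̄)), and F̄ = (q − √(q² − 4(q−1)(1−p)²)) / (2(q−1)(1−p)). -/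
open MeasureTheory ProbabilityTheory Filter Topology

namespace LamplighterTree

/-- `F̄ = (q − √(q² − 4(q−1)(1−p)²)) / (2(q−1)(1−p))`. -/
noncomputable def Fbar (q : ℕ) (p : ℝ) : ℝ :=
  ((q : ℝ) - Real.sqrt ((q : ℝ) ^ 2 - 4 * ((q : ℝ) - 1) * (1 - p) ^ 2)) /
    (2 * ((q : ℝ) - 1) * (1 - p))

/-- `ν̂₃ = p(q−2+p)/(q(pq+q−2)(1−F̄)(1−(1−p)F̄))`. -/
noncomputable def nuhat3 (q : ℕ) (p : ℝ) : ℝ :=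
  p * ((q : ℝ) - 2 + p) /
    ((q : ℝ) * (p * q + q - 2) * (1 - Fbar q p) * (1 - (1 - p) * Fbar q p))

end LamplighterTree

/-!
Subtracting the two bounds leaves a positive multiple of `ν̂₃ − p(q−1)/(q(pq+q−2))`. Since `F̄` is
the smaller root of `(q−1)(1−p)x² − qx + (1−p)`, its square can be eliminated:
`(q−1)(1−F̄)(1−(1−p)F̄) = q−2+p − F̄((q−1)(1−p)−1)`. As `0 < F̄ < 1`, the sign of the difference is
that of `(q−1)(1−p) − 1`, which is nonnegative exactly when `p ≤ (q−2)/(q−1)`.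
-/

namespace LamplighterTree

theorem mul_add_sub_two_pos {q p : ℝ} (hq : 2 ≤ q) (hp : 0 < p) : 0 < p * q + q - 2 := by
  linarith [mul_pos hp (two_pos.trans_le hq)]

theorem lower_bound_factor_sub {K : Type*} [Field K] {q p : K} (ν : K) (hq0 : q ≠ 0)
    (hq1 : q - 1 ≠ 0) (hD : p * q + q - 2 ≠ 0) :
    1 + 2 * q / (q - 1) * ν + p * q / (p * q + q - 2) -
        (q - 2 + 2 * p * (q + 1)) / (p * q + q - 2) =
      2 * q / (q - 1) * (ν - p * (q - 1) / (q * (p * q + q - 2))) := by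
  have hnum : q - 2 + 2 * p * (q + 1) = p * q + q - 2 + (p * q + 2 * p) := by ring
  rw [hnum]
  generalize p * q + q - 2 = D at hD ⊢
  field_simp
  ring

theorem sq_sub_four_mul_sub_one_mul_sq_nonneg (q : ℝ) {s : ℝ} (hs : s ^ 2 ≤ 1) :
    0 ≤ q ^ 2 - 4 * (q - 1) * s ^ 2 := by
  calc
    0 ≤ (1 - s ^ 2) * q ^ 2 + s ^ 2 * (q - 2) ^ 2 :=
      add_nonneg (mul_nonneg (sub_nonneg.2 hs) (sq_nonneg q)) (by positivity)
    _ = q ^ 2 - 4 * (q - 1) * s ^ 2 := by ring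

section

variable {q : ℕ} {p : ℝ}

theorem Fbar_quadratic (hq : 1 < q) (hp0 : 0 ≤ p) (hp1 : p < 1) :
    (q - 1) * (1 - p) * Fbar q p ^ 2 - q * Fbar q p + (1 - p) = 0 := by
  have hq' : (1 : ℝ) < q := Nat.one_lt_cast.2 hq
  have hs : (1 - p) ^ 2 ≤ 1 := (sq_le_one_iff₀ (by linarith)).2 (by linarith)
  have hlead : ((q : ℝ) - 1) * (1 - p) ≠ 0 :=
    (mul_pos (sub_pos.2 hq') (sub_pos.2 hp1)).ne'
  have hdiscrim : discrim (((q : ℝ) - 1) * (1 - p)) (-q) (1 - p) =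
      √((q : ℝ) ^ 2 - 4 * (q - 1) * (1 - p) ^ 2) *
        √((q : ℝ) ^ 2 - 4 * (q - 1) * (1 - p) ^ 2) := by
    rw [Real.mul_self_sqrt (sq_sub_four_mul_sub_one_mul_sq_nonneg q hs), discrim]
    ring
  have hroot := (quadratic_eq_zero_iff hlead hdiscrim (Fbar q p)).2 <| Or.inr <| by
    rw [Fbar, neg_neg, mul_assoc 2]
  linear_combination hroot

theorem Fbar_pos (hq : 1 < q) (hp1 : p < 1) : 0 < Fbar q p := by
  have hq' : (0 : ℝ) < q - 1 := sub_pos.2 (Nat.one_lt_cast.2 hq)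
  have : 0 < 1 - p := sub_pos.2 hp1
  have hsqrt : √((q : ℝ) ^ 2 - 4 * (q - 1) * (1 - p) ^ 2) < q := by
    rw [Real.sqrt_lt' (by linarith), sub_lt_self_iff]
    positivity
  exact div_pos (sub_pos.2 hsqrt) (by positivity)

theorem Fbar_lt_one (hq : 1 < q) (hp0 : 0 < p) (hp1 : p < 1) : Fbar q p < 1 := by
  have hq' : (0 : ℝ) < q - 1 := sub_pos.2 (Nat.one_lt_cast.2 hq)
  have : 0 < 1 - p := sub_pos.2 hp1
  rw [Fbar, div_lt_one (by positivity), sub_lt_comm]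
  refine Real.lt_sqrt_of_sq_lt (sub_pos.1 ?_)
  calc
    0 < 4 * ((q : ℝ) - 1) * (1 - p) * (q * p) := by positivity
    _ = (q : ℝ) ^ 2 - 4 * (q - 1) * (1 - p) ^ 2 - (q - 2 * (q - 1) * (1 - p)) ^ 2 := by ring

theorem sub_one_mul_one_sub_Fbar_mul (hq : 1 < q) (hp0 : 0 ≤ p) (hp1 : p < 1) :
    (q - 1) * ((1 - Fbar q p) * (1 - (1 - p) * Fbar q p)) =
      q - 2 + p - Fbar q p * ((q - 1) * (1 - p) - 1) := by
  linear_combination Fbar_quadratic hq hp0 hp1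

theorem le_nuhat3_iff (hq : 2 ≤ q) (hp0 : 0 < p) (hp1 : p < 1) :
    p * (q - 1) / (q * (p * q + q - 2)) ≤ nuhat3 q p ↔ p ≤ (q - 2) / (q - 1) := by
  have hq2 : (2 : ℝ) ≤ q := Nat.ofNat_le_cast.2 hq
  have hq1 : (0 : ℝ) < q - 1 := by linarith
  have hD : 0 < p * q + q - 2 := mul_add_sub_two_pos hq2 hp0
  have hF0 : 0 < Fbar q p := Fbar_pos hq hp1
  have hF1 : 0 < 1 - Fbar q p := sub_pos.2 (Fbar_lt_one hq hp0 hp1)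
  have hsF : 0 < 1 - (1 - p) * Fbar q p := by linarith [mul_pos hp0 hF0]
  calc
    p * (q - 1) / (q * (p * q + q - 2)) ≤ nuhat3 q p
      ↔ p / (q * (p * q + q - 2)) * (q - 1) ≤ p / (q * (p * q + q - 2)) *
          ((q - 2 + p) / ((1 - Fbar q p) * (1 - (1 - p) * Fbar q p))) := by
        rw [mul_div_right_comm p (q - 1 : ℝ), nuhat3, mul_assoc (_ * _) (1 - Fbar q p),
          mul_div_mul_comm]
    _ ↔ (q - 1) * ((1 - Fbar q p) * (1 - (1 - p) * Fbar q p)) ≤ q - 2 + p := by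
        rw [mul_le_mul_iff_right₀ (by positivity), le_div_iff₀ (by positivity)]
    _ ↔ 0 ≤ (q - 1) * (1 - p) - 1 := by
        rw [sub_one_mul_one_sub_Fbar_mul hq hp0.le hp1, sub_le_self_iff,
          mul_nonneg_iff_of_pos_left hF0]
    _ ↔ p ≤ (q - 2) / (q - 1) := by
        rw [le_div_iff₀ hq1]
        constructor <;> intro h <;> linarith

theorem second_lower_bound_dominates_general (hq : 3 ≤ q) (hp0 : 0 < p) (hp1 : p < 1) :
    (1 - p) * ((q : ℝ) - 2) / q *
        (1 + (2 * (q : ℝ) / ((q : ℝ) - 1)) * nuhat3 q p + p * q / (p * q + q - 2)) ≥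
      (1 - p) * ((q : ℝ) - 2) / q *
        (((q : ℝ) - 2 + 2 * p * ((q : ℝ) + 1)) / (p * q + q - 2)) ↔
      p ≤ ((q : ℝ) - 2) / ((q : ℝ) - 1) := by
  have hq3 : (3 : ℝ) ≤ q := Nat.ofNat_le_cast.2 hq
  have : 0 < 1 - p := sub_pos.2 hp1
  have hq2 : (0 : ℝ) < q - 2 := by linarith
  have hq1 : (0 : ℝ) < q - 1 := by linarith
  have hD : 0 < p * q + q - 2 := mul_add_sub_two_pos (by linarith) hp0
  rw [ge_iff_le, mul_le_mul_iff_right₀ (by positivity), ← sub_nonneg,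
    lower_bound_factor_sub _ (by positivity) hq1.ne' hD.ne',
    mul_nonneg_iff_of_pos_left (by positivity), sub_nonneg,
    le_nuhat3_iff (by lia) hp0 hp1]

end

/-- for `q ≥ 3` and `p ∈ (0,1)` with `p ≤ (q−2)/(q−1)`,
`ℓ_low,2 ≥ ℓ_low`. -/
theorem second_lower_bound_dominates (q : ℕ) (hq : 3 ≤ q) (p : ℝ)
    (hp0 : 0 < p) (hp1 : p < 1) (hple : p ≤ ((q : ℝ) - 2) / ((q : ℝ) - 1)) :
    (1 - p) * ((q : ℝ) - 2) / q *
        (1 + (2 * (q : ℝ) / ((q : ℝ) - 1)) * nuhat3 q p + p * q / (p * q + q - 2)) ≥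
      (1 - p) * ((q : ℝ) - 2) / q *
        (((q : ℝ) - 2 + 2 * p * ((q : ℝ) + 1)) / (p * q + q - 2)) :=
  (second_lower_bound_dominates_general hq hp0 hp1).2 hple

end LamplighterTree
end
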